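/- arXiv:1703.07434 — 4 statements merged into one kernel-verified Lean document; each statement's English description precedes it below -/
import Mathlib

section
/- Let T be a ternary semigroup. The following are equivalent: (1) the family of zero-sets {Z(a) : a ∈ T}, where Z(a) = {h ∈ Hom_TS(T,3) : h(a) = 0}, is totally ordered under inclusion; (2) for all a, b ∈ T, a²b² = a² or a²b² = b²; (3) for all a, b ∈ T, a divides b or b divides a; (4) every proper ideal of T is prime; (5) the set of ideals of T is totally ordered under inclusion. -/
universe u

/-- A ternary semigroup: a commutative monoid with distinguished elements `0` (`tzero`)
and `-1` (`tneg`) satisfying `x³ = x`, `-1 ≠ 1`, `(-1)(-1) = 1`, `x·0 = 0`, and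
`x = -1·x → x = 0`. -/
class TernarySemigroup (G : Type u) extends CommMonoid G where
  tzero : G
  tneg : G
  cube : ∀ x : G, x * x * x = x
  tneg_ne_one : tneg ≠ 1
  tneg_mul_tneg : tneg * tneg = 1
  mul_tzero : ∀ x : G, x * tzero = tzero
  eq_tzero_of_eq_tneg_mul : ∀ x : G, x = tneg * x → x = tzero

open TernarySemigroup

/-- A TS-character of `G` with values in the ternary semigroup `3 = {-1,0,1}` (`SignType`). -/
def IsTSChar {G : Type u} [TernarySemigroup G] (h : G → SignType) : Prop :=
  (∀ x y : G, h (x * y) = h x * h y) ∧ h 1 = 1 ∧ h (tzero : G) = 0 ∧ h (tneg : G) = -1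

/-- An ideal of a ternary semigroup: a nonempty subset closed under multiplication
by arbitrary elements. -/
def TSIdeal {G : Type u} [TernarySemigroup G] (I : Set G) : Prop :=
  I.Nonempty ∧ ∀ x ∈ I, ∀ y : G, x * y ∈ I

/-!
The key point is that `Z(a) ⊆ Z(b)` holds exactly when `a` divides `b`. If `a ∤ b`, localize at the
powers of `b`: the image of `a` is a non-unit since every power of `b` divides `b`, and `-1 ≠ 1`
persists since no power of `b` is `0`. Every unit of the localization squares to `1`, so the units
form a vector space over `𝔽₂`, and some linear functional, written multiplicatively with values in
`{±1}`, sends `-1` to `-1`. Extended by zero to the non-units, it pulls back to a character that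
vanishes at `a` but not at `b`.
-/

section CommMonoid

variable {M : Type*} [CommMonoid M]

theorem mul_dvd_of_dvd_of_cube_eq_self {a b c : M} (hc : c * c * c = c) (ha : a ∣ c) (hb : b ∣ c) :
    a * b ∣ c :=
  (mul_dvd_mul ha hb).trans ⟨c, hc.symm⟩

theorem pow_dvd_self_of_cube_eq_self {b : M} (hb : b * b * b = b) (n : ℕ) : b ^ n ∣ b := by
  induction n with
  | zero => simp only [pow_zero, one_dvd]
  | succ n ih => exact pow_succ b n ▸ mul_dvd_of_dvd_of_cube_eq_self hb ih dvd_rfl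

theorem dvd_iff_sq_mul_sq_eq_of_cube_eq_self {a b : M} (ha : a * a * a = a) (hb : b * b * b = b) :
    a ∣ b ↔ a * a * (b * b) = b * b := by
  constructor
  · rintro ⟨x, rfl⟩
    calc a * a * (a * x * (a * x)) = a * a * a * x * (a * x) := by ac_rfl
      _ = a * x * (a * x) := by rw [ha]
  · intro h
    exact ⟨a * (b * b) * b, by
      calc b = a * a * (b * b) * b := by rw [h, hb]
        _ = a * (a * (b * b) * b) := by ac_rfl⟩

theorem localization_cube_eq_self (hM : ∀ x : M, x * x * x = x) (S : Submonoid M)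
    (z : Localization S) : z * z * z = z := by
  induction z using Localization.induction_on with
  | H xs =>
    obtain ⟨x, s⟩ := xs
    have hs : s * s * s = s := Subtype.ext (hM s)
    rw [Localization.mk_mul, Localization.mk_mul, hM, hs]

theorem units_sq_eq_one_of_cube_eq_self {u : Mˣ} (hu : (u * u * u : M) = u) : u ^ 2 = 1 := by
  rw [sq]
  exact mul_eq_right.mp (Units.ext hu)

end CommMonoid

theorem exists_addMonoidHom_apply_eq_of_prime_nsmul_eq_zero {E H : Type*} [AddCommGroup E]
    [AddGroup H] {p : ℕ} [Fact p.Prime] (hE : ∀ x : E, p • x = 0) {g : E} (hg : g ≠ 0) {y : H}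
    (hy : p • y = 0) : ∃ φ : E →+ H, φ g = y := by
  let : Module (ZMod p) E := AddCommGroup.zmodModule (n := p) hE
  obtain ⟨f, hf⟩ := Module.Projective.exists_dual_eq_one (ZMod p) hg
  let multiples : {m : ℤ →+ H // m p = 0} :=
    ⟨zmultiplesHom H y, by rw [zmultiplesHom_apply, natCast_zsmul, hy]⟩
  refine ⟨(ZMod.lift p multiples).comp f.toAddMonoidHom, ?_⟩
  calc ZMod.lift p multiples (f g) = ZMod.lift p multiples (1 : ℤ) := by rw [hf, Int.cast_one]
    _ = (1 : ℤ) • y := ZMod.lift_coe p multiples 1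
    _ = y := one_zsmul y

theorem exists_monoidHom_apply_eq_of_pow_prime_eq_one {E H : Type*} [CommGroup E] [Group H]
    {p : ℕ} [Fact p.Prime] (hE : ∀ x : E, x ^ p = 1) {g : E} (hg : g ≠ 1) {y : H}
    (hy : y ^ p = 1) : ∃ φ : E →* H, φ g = y := by
  obtain ⟨φ, hφ⟩ := exists_addMonoidHom_apply_eq_of_prime_nsmul_eq_zero
    (E := Additive E) (H := Additive H) hE hg hy
  exact ⟨AddMonoidHom.toMultiplicative φ, hφ⟩

theorem exists_mulChar_signType_apply_eq_neg_one {M : Type*} [CommMonoid M]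
    (hM : ∀ u : Mˣ, u ^ 2 = 1) {g : Mˣ} (hg : g ≠ 1) : ∃ χ : MulChar M SignType, χ g = -1 := by
  obtain ⟨φ, hφ⟩ := exists_monoidHom_apply_eq_of_pow_prime_eq_one hM hg (y := (-1 : SignTypeˣ))
    neg_one_sq
  exact ⟨MulChar.ofUnitHom φ, by rw [MulChar.ofUnitHom_coe, hφ, Units.val_neg, Units.val_one]⟩

section TernarySemigroup

variable {G : Type u} [TernarySemigroup G]

/-- The zero-set `Z(a)`: the TS-characters vanishing at `a`. -/
def zeroSet (a : G) : Set (G → SignType) :=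
  {h | IsTSChar h ∧ h a = 0}

theorem zeroSet_subset_of_dvd {a b : G} (hab : a ∣ b) : zeroSet a ⊆ zeroSet b := by
  obtain ⟨x, rfl⟩ := hab
  rintro h ⟨hchar, ha⟩
  exact ⟨hchar, by rw [hchar.1, ha, zero_mul]⟩

theorem dvd_tzero (a : G) : a ∣ tzero :=
  ⟨tzero, (mul_tzero a).symm⟩

theorem exists_isTSChar_eq_zero_iff_not_isUnit {M : Type*} [CommMonoid M]
    (hM : ∀ u : Mˣ, u ^ 2 = 1) (f : G →* M) (hf : f tneg ≠ 1) :
    ∃ h : G → SignType, IsTSChar h ∧ ∀ x, h x = 0 ↔ ¬IsUnit (f x) := by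
  have tneg_unit : IsUnit (f tneg) := (IsUnit.of_mul_eq_one _ tneg_mul_tneg).map f
  have tzero_not_unit : ¬IsUnit (f tzero) := fun hunit ↦
    hf (hunit.mul_eq_right.mp (by rw [← map_mul, mul_tzero]))
  obtain ⟨χ, hχ⟩ := exists_mulChar_signType_apply_eq_neg_one hM
    (g := tneg_unit.unit) (fun h ↦ hf (congrArg Units.val h))
  refine ⟨χ ∘ f, ⟨fun x y ↦ ?_, ?_, χ.map_nonunit tzero_not_unit, hχ⟩, fun x ↦
    ⟨fun hx hunit ↦ (hunit.map χ).ne_zero hx, χ.map_nonunit⟩⟩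
  · simp only [Function.comp_apply, map_mul]
  · simp only [Function.comp_apply, map_one]

theorem exists_isTSChar_eq_zero_iff_forall_not_dvd {S : Submonoid G} (hS : tzero ∉ S) :
    ∃ h : G → SignType, IsTSChar h ∧ ∀ x, h x = 0 ↔ ∀ s ∈ S, ¬x ∣ s := by
  let f := Localization.monoidOf S
  have hf : f tneg ≠ 1 := by
    intro h
    obtain ⟨s, hs⟩ := f.eq_iff_exists.mp (h.trans (map_one f).symm)
    have : (s : G) = tneg * s := by rw [mul_comm, hs, mul_one]
    exact hS (eq_tzero_of_eq_tneg_mul _ this ▸ s.2)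
  obtain ⟨h, hchar, hzero⟩ := exists_isTSChar_eq_zero_iff_not_isUnit
    (fun u ↦ units_sq_eq_one_of_cube_eq_self (localization_cube_eq_self cube S u))
    f.toMonoidHom hf
  refine ⟨h, hchar, fun x ↦ (hzero x).trans ?_⟩
  rw [Submonoid.LocalizationMap.toMonoidHom_apply, f.map_isUnit_iff]
  simp only [not_exists, not_and]

theorem zeroSet_subset_zeroSet_iff_dvd {a b : G} : zeroSet a ⊆ zeroSet b ↔ a ∣ b := by
  refine ⟨fun hsub ↦ ?_, zeroSet_subset_of_dvd⟩
  by_contra hab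
  have not_dvd_pow : ∀ s ∈ Submonoid.powers b, ¬a ∣ s := by
    rintro _ ⟨n, rfl⟩ h
    exact hab (h.trans (pow_dvd_self_of_cube_eq_self (cube b) n))
  obtain ⟨h, hchar, hzero⟩ := exists_isTSChar_eq_zero_iff_forall_not_dvd
    (fun h0 ↦ not_dvd_pow tzero h0 (dvd_tzero a))
  have hb : h b = 0 := (hsub ⟨hchar, (hzero a).mpr not_dvd_pow⟩).2
  exact (hzero b).mp hb b (Submonoid.mem_powers b) dvd_rfl

theorem TSIdeal.mem_of_dvd {I : Set G} (hI : TSIdeal I) {a b : G} (ha : a ∈ I) (hab : a ∣ b) :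
    b ∈ I := by
  obtain ⟨x, rfl⟩ := hab
  exact hI.2 a ha x

theorem tsIdeal_setOf_dvd (a : G) : TSIdeal {x | a ∣ x} :=
  ⟨⟨a, dvd_rfl⟩, fun _ hx y ↦ hx.mul_right y⟩

theorem forall_tsIdeal_subset_total_iff_dvd_total :
    (∀ I J : Set G, TSIdeal I → TSIdeal J → I ⊆ J ∨ J ⊆ I) ↔ ∀ a b : G, a ∣ b ∨ b ∣ a := by
  constructor
  · intro htotal a b
    exact (htotal _ _ (tsIdeal_setOf_dvd a) (tsIdeal_setOf_dvd b)).symm.imp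
      (fun h ↦ h dvd_rfl) (fun h ↦ h dvd_rfl)
  · intro hdvd I J hI hJ
    by_contra! hIJ
    obtain ⟨⟨a, haI, haJ⟩, b, hbJ, hbI⟩ := hIJ.imp Set.not_subset.mp Set.not_subset.mp
    exact (hdvd a b).elim (fun hab ↦ hbI (hI.mem_of_dvd haI hab))
      (fun hba ↦ haJ (hJ.mem_of_dvd hbJ hba))

theorem forall_tsIdeal_prime_iff_dvd_total :
    (∀ I : Set G, TSIdeal I → I ≠ Set.univ → ∀ a b : G, a * b ∈ I → a ∈ I ∨ b ∈ I) ↔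
      ∀ a b : G, a ∣ b ∨ b ∣ a := by
  constructor
  · intro hprime a b
    have hmem : a * b ∣ a ∨ a * b ∣ b := by
      by_cases hproper : {x | a * b ∣ x} = Set.univ
      · exact Or.inl (Set.eq_univ_iff_forall.mp hproper a)
      · exact hprime _ (tsIdeal_setOf_dvd (a * b)) hproper a b dvd_rfl
    exact hmem.symm.imp dvd_of_mul_right_dvd dvd_of_mul_left_dvd
  · intro hdvd I hI _ a b habI
    exact (hdvd b a).imp
      (fun hba ↦ hI.mem_of_dvd habI (mul_dvd_of_dvd_of_cube_eq_self (cube a) dvd_rfl hba))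
      (fun hab ↦ hI.mem_of_dvd habI (mul_dvd_of_dvd_of_cube_eq_self (cube b) hab dvd_rfl))

end TernarySemigroup

/-- Characterizations of ternary semigroups whose zero-sets (equivalently, ideals) are
totally ordered under inclusion. -/
theorem stmt_3 (G : Type u) [TernarySemigroup G] :
    List.TFAE
      [ ∀ a b : G,
          {h : G → SignType | IsTSChar h ∧ h a = 0} ⊆ {h : G → SignType | IsTSChar h ∧ h b = 0} ∨
          {h : G → SignType | IsTSChar h ∧ h b = 0} ⊆ {h : G → SignType | IsTSChar h ∧ h a = 0},
        ∀ a b : G, a * a * (b * b) = a * a ∨ a * a * (b * b) = b * b,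
        ∀ a b : G, (∃ x : G, b = a * x) ∨ (∃ x : G, a = b * x),
        ∀ I : Set G, TSIdeal I → I ≠ Set.univ → ∀ a b : G, a * b ∈ I → a ∈ I ∨ b ∈ I,
        ∀ I J : Set G, TSIdeal I → TSIdeal J → I ⊆ J ∨ J ⊆ I ] := by
  tfae_have 1 ↔ 3 := forall₂_congr fun a b ↦
    or_congr zeroSet_subset_zeroSet_iff_dvd zeroSet_subset_zeroSet_iff_dvd
  tfae_have 2 ↔ 3 := forall₂_congr fun a b ↦ by
    rw [or_comm, ← dvd_iff_sq_mul_sq_eq_of_cube_eq_self (cube a) (cube b), mul_comm (a * a),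
      ← dvd_iff_sq_mul_sq_eq_of_cube_eq_self (cube b) (cube a)]
    rfl
  tfae_have 4 ↔ 3 := forall_tsIdeal_prime_iff_dvd_total
  tfae_have 5 ↔ 3 := forall_tsIdeal_subset_total_iff_dvd_total
  tfae_finish
end

section
/- Let G be a ternary semigroup satisfying condition [Z], and let X ⊆ Hom_TS(G,3) be such that (X,G) is a q-fan. Define D^t_X by: c ∈ D^t_X(a,b) iff for every h ∈ X, either h(c) = 0 and h(a) = -h(b), or h(c) ≠ 0 and (h(c) = h(a) or h(c) = h(b)). Then for all a, b ∈ G: (i) if a²b² = b² and a² ≠ b² then D^t_X(a,b) = {a}; (ii) if a²b² = a² and a² ≠ b² then D^t_X(a,b) = {b}; (iii) if a² = b² and b ≠ -a then D^t_X(a,b) = {a, b}; (iv) if b = -a then D^t_X(a,b) = a·G. -/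
universe u

open TernarySemigroup

/-- Condition [Z]: the zero sets of elements are totally ordered, algebraically:
`a²b² = a²` or `a²b² = b²` for all `a, b`. -/
def CondZ (G : Type u) [TernarySemigroup G] : Prop :=
  ∀ a b : G, a * a * (b * b) = a * a ∨ a * a * (b * b) = b * b

/-- `(X, G)` is a q-fan: `X` is a nonempty set of TS-characters of `G`, closed under the
pointwise product of any three of its members, and separating points of `G`. -/
def IsQFan (G : Type u) [TernarySemigroup G] (X : Set (G → SignType)) : Prop :=
  X.Nonempty ∧ (∀ h ∈ X, IsTSChar h) ∧
  (∀ h₁ ∈ X, ∀ h₂ ∈ X, ∀ h₃ ∈ X, h₁ * h₂ * h₃ ∈ X) ∧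
  (∀ a b : G, a ≠ b → ∃ h ∈ X, h a ≠ h b)

/-- The transversal representation relation determined by a set `X` of characters:
`DtX X c a b` means `c ∈ D^t_X(a,b)`. -/
def DtX {G : Type u} [TernarySemigroup G] (X : Set (G → SignType)) (c a b : G) : Prop :=
  ∀ h ∈ X, (h c = 0 ∧ h a = -(h b)) ∨ (h c ≠ 0 ∧ (h c = h a ∨ h c = h b))

/-!
Divisibility in `G` is detected by zero sets: `a ∣ c` iff every `h ∈ X` vanishing at `a` vanishes
at `c`, and `a² b² = b²` says exactly that `a ∣ b`. A member `c` of `D^t_X(a, b)` agrees with `a` at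
each `h ∈ X` with `h b = 0` or `h a = h b`. If some `g ∈ X` has this property, then so do certain
triple products involving `g`, and cancelling the nonzero values of `g` carries the information
about `c` over to every other character.
-/

section

variable {G : Type u} [TernarySemigroup G]

namespace TernarySemigroup

variable {a b : G}

theorem dvd_iff_mul_self_mul_mul_self_eq : a ∣ b ↔ a * a * (b * b) = b * b := by
  constructor
  · rintro ⟨x, rfl⟩
    calc a * a * (a * x * (a * x)) = a * a * a * x * (a * x) := by simp only [mul_assoc]
      _ = a * x * (a * x) := by rw [cube]
  · intro hab
    refine ⟨a * (b * b) * b, ?_⟩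
    calc b = b * b * b := (cube b).symm
      _ = a * a * (b * b) * b := by rw [hab]
      _ = a * (a * (b * b) * b) := by simp only [mul_assoc]

theorem mul_self_eq_mul_self_iff_dvd : a * a = b * b ↔ a ∣ b ∧ b ∣ a := by
  simp only [dvd_iff_mul_self_mul_mul_self_eq]
  constructor
  · intro hab
    have hidem : b * b * (b * b) = b * b := by rw [← mul_assoc, cube]
    exact ⟨by rw [hab, hidem], by rw [hab, hidem]⟩
  · rintro ⟨hab, hba⟩
    rw [← hba, mul_comm, hab]

end TernarySemigroup

theorem IsTSChar.map_tneg_mul {h : G → SignType} (hh : IsTSChar h) (x : G) :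
    h (tneg * x) = -h x := by
  rw [hh.1, hh.2.2.2, neg_one_mul]

variable {X : Set (G → SignType)} {a b c : G} {h : G → SignType}

namespace DtX

theorem symm (hc : DtX X c a b) : DtX X c b a := by
  intro h hh
  rcases hc h hh with ⟨hc0, hab⟩ | ⟨hc0, hcab⟩
  · exact Or.inl ⟨hc0, by rw [hab, neg_neg]⟩
  · exact Or.inr ⟨hc0, hcab.symm⟩

theorem eq_of_right_eq_zero (hc : DtX X c a b) (hh : h ∈ X) (hb : h b = 0) : h c = h a := by
  rcases hc h hh with ⟨hc0, hab⟩ | ⟨hc0, hca | hcb⟩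
  · rw [hc0, hab, hb, neg_zero]
  · exact hca
  · exact absurd (hcb.trans hb) hc0

theorem eq_of_eq (hc : DtX X c a b) (hh : h ∈ X) (hab : h a = h b) : h c = h a := by
  rcases hc h hh with ⟨hc0, hneg⟩ | ⟨-, hca | hcb⟩
  · rw [← hab, SignType.self_eq_neg_iff] at hneg
    rw [hc0, hneg]
  · exact hca
  · rw [hcb, hab]

end DtX

theorem dtX_comm : DtX X c a b ↔ DtX X c b a :=
  ⟨DtX.symm, DtX.symm⟩

theorem dtX_left_iff : DtX X a a b ↔ ∀ h ∈ X, h a = 0 → h b = 0 := by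
  refine forall₂_congr fun h _ => ?_
  by_cases ha : h a = 0 <;> simp [ha, eq_comm]

namespace IsQFan

theorem isTSChar (hX : IsQFan G X) (hh : h ∈ X) : IsTSChar h :=
  hX.2.1 h hh

theorem mul_mul_mem (hX : IsQFan G X) {h₁ h₂ h₃ : G → SignType} (hh₁ : h₁ ∈ X) (hh₂ : h₂ ∈ X)
    (hh₃ : h₃ ∈ X) : h₁ * h₂ * h₃ ∈ X :=
  hX.2.2.1 h₁ hh₁ h₂ hh₂ h₃ hh₃

theorem exists_ne (hX : IsQFan G X) (hab : a ≠ b) : ∃ h ∈ X, h a ≠ h b :=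
  hX.2.2.2 a b hab

theorem eq_of_forall_eq (hX : IsQFan G X) (hab : ∀ h ∈ X, h a = h b) : a = b := by
  by_contra hne
  obtain ⟨h, hh, hhab⟩ := hX.exists_ne hne
  exact hhab (hab h hh)

theorem dvd_iff (hX : IsQFan G X) : a ∣ c ↔ ∀ h ∈ X, h a = 0 → h c = 0 := by
  constructor
  · rintro ⟨x, rfl⟩ h hh ha
    rw [(hX.isTSChar hh).1, ha, zero_mul]
  · intro hac
    refine ⟨a * c, hX.eq_of_forall_eq fun h hh => ?_⟩
    rw [(hX.isTSChar hh).1, (hX.isTSChar hh).1]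
    have sign_mul_mul_cancel : ∀ x y : SignType, (x = 0 → y = 0) → y = x * (x * y) := by decide
    exact sign_mul_mul_cancel _ _ (hac h hh)

theorem dtX_left_iff_dvd (hX : IsQFan G X) : DtX X a a b ↔ a ∣ b :=
  dtX_left_iff.trans hX.dvd_iff.symm

theorem dtX_tneg_mul_iff_dvd (hX : IsQFan G X) : DtX X c a (tneg * a) ↔ a ∣ c := by
  rw [hX.dvd_iff]
  refine forall₂_congr fun h hh => ?_
  rw [(hX.isTSChar hh).map_tneg_mul]
  generalize h a = x, h c = z
  revert x z
  decide

theorem eq_left_of_dtX (hX : IsQFan G X) (hba : ¬b ∣ a) (hc : DtX X c a b) : c = a := by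
  obtain ⟨g, hg, hgb, hga⟩ : ∃ g ∈ X, g b = 0 ∧ g a ≠ 0 := by
    simpa [hX.dvd_iff] using hba
  have hgc : g c = g a := hc.eq_of_right_eq_zero hg hgb
  refine hX.eq_of_forall_eq fun h hh => ?_
  have hhgg : h c * g c * g c = h a * g a * g a :=
    hc.eq_of_right_eq_zero (hX.mul_mul_mem hh hg hg) (by simp [hgb])
  rw [hgc] at hhgg
  exact mul_right_cancel₀ hga (mul_right_cancel₀ hga hhgg)

theorem dtX_iff_eq_left (hX : IsQFan G X) (hab : a ∣ b) (hba : ¬b ∣ a) : DtX X c a b ↔ c = a := by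
  refine ⟨hX.eq_left_of_dtX hba, ?_⟩
  rintro rfl
  exact hX.dtX_left_iff_dvd.2 hab

theorem eq_or_eq_neg_of_dvd_dvd (hX : IsQFan G X) (hab : a ∣ b) (hba : b ∣ a) (hh : h ∈ X) :
    h a = h b ∨ h b = -h a := by
  have sign_eq_or_eq_neg : ∀ x y : SignType, (x = 0 → y = 0) → (y = 0 → x = 0) →
      x = y ∨ y = -x := by decide
  exact sign_eq_or_eq_neg _ _ (hX.dvd_iff.1 hab h hh) (hX.dvd_iff.1 hba h hh)

theorem exists_eq_of_ne_tneg_mul (hX : IsQFan G X) (hab : a ∣ b) (hba : b ∣ a)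
    (hne : b ≠ tneg * a) : ∃ g ∈ X, g a = g b ∧ g a ≠ 0 := by
  obtain ⟨g, hg, hgne⟩ := hX.exists_ne hne
  rw [(hX.isTSChar hg).map_tneg_mul] at hgne
  have hgab : g a = g b := (hX.eq_or_eq_neg_of_dvd_dvd hab hba hg).resolve_right hgne
  refine ⟨g, hg, hgab, fun hga => hgne ?_⟩
  rw [← hgab, hga, neg_zero]

theorem apply_eq_or_eq_of_dtX (hX : IsQFan G X) {g : G → SignType} (hg : g ∈ X)
    (hgab : g a = g b) (hga : g a ≠ 0) (hc : DtX X c a b) (hh : h ∈ X) :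
    h c = h a ∨ h c = h b := by
  rcases hc h hh with ⟨hc0, hneg⟩ | ⟨-, hcab⟩
  · have hsq : h a * h a = h b * h b := by rw [hneg, neg_mul_neg]
    have hhhg : h c * h c * g c = h a * h a * g a :=
      hc.eq_of_eq (hX.mul_mul_mem hh hh hg) (by simp [hsq, hgab])
    have ha0 : h a = 0 := by simpa [hc0, hga] using hhhg
    exact Or.inl (hc0.trans ha0.symm)
  · exact hcab

theorem eq_or_eq_of_dtX (hX : IsQFan G X) (hab : a ∣ b) (hba : b ∣ a) (hne : b ≠ tneg * a)
    (hc : DtX X c a b) : c = a ∨ c = b := by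
  obtain ⟨g, hg, hgab, hga⟩ := hX.exists_eq_of_ne_tneg_mul hab hba hne
  have hgc : g c = g a := hc.eq_of_eq hg hgab
  by_contra! ⟨hca, hcb⟩
  obtain ⟨h, hh, hhca⟩ := hX.exists_ne hca
  obtain ⟨k, hk, hkcb⟩ := hX.exists_ne hcb
  have hhcb : h c = h b :=
    (hX.apply_eq_or_eq_of_dtX hg hgab hga hc hh).resolve_left hhca
  have hkca : k c = k a :=
    (hX.apply_eq_or_eq_of_dtX hg hgab hga hc hk).resolve_right hkcb
  have hhneg : h b = -h a :=
    (hX.eq_or_eq_neg_of_dvd_dvd hab hba hh).resolve_left fun heq => hhca (hhcb.trans heq.symm)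
  have hkneg : k b = -k a :=
    (hX.eq_or_eq_neg_of_dvd_dvd hab hba hk).resolve_left fun heq => hkcb (hkca.trans heq)
  have hka : k a ≠ 0 := fun hka => hkcb (by rw [hkca, hkneg, hka, neg_zero])
  -- The two sign changes between `a` and `b` cancel in `h * k * g`.
  have hhkg : h c * k c * g c = h a * k a * g a :=
    hc.eq_of_eq (hX.mul_mul_mem hh hk hg) (by simp [hhneg, hkneg, hgab])
  rw [hkca, hgc] at hhkg
  exact hhca (mul_right_cancel₀ hka (mul_right_cancel₀ hga hhkg))

theorem dtX_iff_eq_or_eq (hX : IsQFan G X) (hab : a ∣ b) (hba : b ∣ a) (hne : b ≠ tneg * a) :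
    DtX X c a b ↔ c = a ∨ c = b := by
  refine ⟨hX.eq_or_eq_of_dtX hab hba hne, ?_⟩
  rintro (rfl | rfl)
  · exact hX.dtX_left_iff_dvd.2 hab
  · exact (hX.dtX_left_iff_dvd.2 hba).symm

end IsQFan

theorem stmt_6_general (hX : IsQFan G X) (a b : G) :
    ((a * a * (b * b) = b * b ∧ a * a ≠ b * b) → {c : G | DtX X c a b} = {a}) ∧
    ((a * a * (b * b) = a * a ∧ a * a ≠ b * b) → {c : G | DtX X c a b} = {b}) ∧
    ((a * a = b * b ∧ b ≠ tneg * a) → {c : G | DtX X c a b} = {a, b}) ∧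
    (b = tneg * a → {c : G | DtX X c a b} = {y : G | ∃ x : G, y = a * x}) := by
  rw [← dvd_iff_mul_self_mul_mul_self_eq, mul_comm (a * a), ← dvd_iff_mul_self_mul_mul_self_eq,
    Ne, mul_self_eq_mul_self_iff_dvd]
  refine ⟨?_, ?_, ?_, ?_⟩
  · rintro ⟨hab, hne⟩
    ext c
    exact hX.dtX_iff_eq_left hab fun hba => hne ⟨hab, hba⟩
  · rintro ⟨hba, hne⟩
    ext c
    exact dtX_comm.trans (hX.dtX_iff_eq_left hba fun hab => hne ⟨hab, hba⟩)
  · rintro ⟨⟨hab, hba⟩, hne⟩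
    ext c
    exact hX.dtX_iff_eq_or_eq hab hba hne
  · rintro rfl
    ext c
    exact hX.dtX_tneg_mul_iff_dvd

end

/-- Explicit description of transversal representation in a q-fan over a ternary semigroup
satisfying condition [Z]. -/
theorem stmt_6 {G : Type u} [TernarySemigroup G] (hZ : CondZ G)
    (X : Set (G → SignType)) (hX : IsQFan G X) (a b : G) :
    ((a * a * (b * b) = b * b ∧ a * a ≠ b * b) → {c : G | DtX X c a b} = {a}) ∧
    ((a * a * (b * b) = a * a ∧ a * a ≠ b * b) → {c : G | DtX X c a b} = {b}) ∧
    ((a * a = b * b ∧ b ≠ tneg * a) → {c : G | DtX X c a b} = {a, b}) ∧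
    (b = tneg * a → {c : G | DtX X c a b} = {y : G | ∃ x : G, y = a * x}) :=
  stmt_6_general hX a b
end

section
/- Let G be a RS-fan, with D its fan representation relation and D^t the derived transversal relation. Then the invertible elements of G form a fan in the sense of reduced special groups: for all a, b ∈ G with a² = b² = 1, if b ≠ -a then D^t(a,b) = {a, b}, while if b = -a then D^t(a,b) = G; moreover, for invertible c (c² = 1), c ∈ D(a,b) if and only if c ∈ D^t(a,b). -/
universe u

open TernarySemigroup

/-- The transversal representation relation derived from a ternary relation `D`
(`Dt D a b c` means `a ∈ D^t(b,c)`, where `D c a b` means `c ∈ D(a,b)`). -/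
def Dt {G : Type u} [TernarySemigroup G] (D : G → G → G → Prop) (a b c : G) : Prop :=
  D a b c ∧ D (tneg * b) (tneg * a) c ∧ D (tneg * c) b (tneg * a)

/-- The fan representation relation on a ternary semigroup:
`fanD c a b` means `c ∈ D(a,b)`, i.e. `c ∈ a·Id(G) ∪ b·Id(G)` or (`ca = -cb` and `c = a²c`). -/
def fanD {G : Type u} [TernarySemigroup G] (c a b : G) : Prop :=
  (∃ x : G, c = a * (x * x)) ∨ (∃ x : G, c = b * (x * x)) ∨
  (c * a = tneg * (c * b) ∧ c = a * a * c)

/-!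
An invertible element of the form `a * x²` equals `a`, because `x³ = x` makes it absorb `x²`, which
is therefore `1`. So an invertible `c` lies in `D(a, b)` only if `c = a`, `c = b`, or `b = -a` with
`a` invertible. The last two clauses of `c ∈ D^t(a, b)` concern the representation of the invertible
elements `-a` and `-b`; each of them says that `c = a`, `c = b` or `b = -a`, for arbitrary `c`.
-/

namespace TernarySemigroup

variable {G : Type u} [TernarySemigroup G] {a b c x : G}

/-- Negation `-x = (-1) * x` on a ternary semigroup, so that Mathlib's sign rules apply;
`-x` is definitionally `tneg * x`. -/
instance : HasDistribNeg G where
  neg x := tneg * x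
  neg_neg x := by rw [← mul_assoc, tneg_mul_tneg, one_mul]
  neg_mul x y := mul_assoc tneg x y
  mul_neg x y := mul_left_comm x tneg y

theorem tneg_mul (x : G) : tneg * x = -x := rfl

theorem eq_of_eq_mul_mul_self (hc : c * c = 1) (h : c = a * (x * x)) : c = a := by
  have c_absorbs : c * (x * x) = c := by
    calc c * (x * x) = a * (x * x * x * x) := by rw [h]; ac_rfl
      _ = c := by rw [cube, h]
  have sq_eq_one : x * x = 1 := (IsUnit.of_mul_eq_one c hc).mul_eq_left.mp c_absorbs
  rw [h, sq_eq_one, mul_one]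

theorem fanD_left (a b : G) : fanD a a b :=
  Or.inl ⟨1, by simp⟩

theorem fanD_right (a b : G) : fanD b a b :=
  Or.inr (Or.inl ⟨1, by simp⟩)

theorem fanD_self_neg (h : c = a * a * c) : fanD c a (-a) :=
  Or.inr (Or.inr ⟨by rw [tneg_mul, mul_neg, neg_neg], h⟩)

theorem fanD_iff_of_mul_self_eq_one (hc : c * c = 1) :
    fanD c a b ↔ c = a ∨ c = b ∨ (b = -a ∧ a * a = 1) := by
  have c_unit : IsUnit c := .of_mul_eq_one c hc
  constructor
  · rintro (⟨x, hx⟩ | ⟨x, hx⟩ | ⟨h_neg, h_absorbs⟩)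
    · exact Or.inl (eq_of_eq_mul_mul_self hc hx)
    · exact Or.inr (Or.inl (eq_of_eq_mul_mul_self hc hx))
    · rw [tneg_mul, ← mul_neg] at h_neg
      have a_eq : a = -b := c_unit.mul_left_cancel h_neg
      have a_sq : a * a = 1 := c_unit.mul_eq_right.mp h_absorbs.symm
      exact Or.inr (Or.inr ⟨(neg_eq_iff_eq_neg.mpr a_eq).symm, a_sq⟩)
  · rintro (rfl | rfl | ⟨rfl, ha⟩)
    · exact fanD_left c b
    · exact fanD_right a c
    · exact fanD_self_neg (by rw [ha, one_mul])

theorem dt_fanD_iff (ha : a * a = 1) (hb : b * b = 1) :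
    Dt fanD c a b ↔ c = a ∨ c = b ∨ b = -a := by
  have neg_a_sq : -a * -a = 1 := by rw [neg_mul_neg, ha]
  have neg_b_sq : -b * -b = 1 := by rw [neg_mul_neg, hb]
  simp only [Dt, tneg_mul, fanD_iff_of_mul_self_eq_one neg_a_sq,
    fanD_iff_of_mul_self_eq_one neg_b_sq, neg_inj, neg_neg]
  constructor
  · rintro ⟨-, a_eq | neg_a_eq | ⟨b_eq, -⟩, -⟩
    · exact Or.inl a_eq.symm
    · exact Or.inr (Or.inr neg_a_eq.symm)
    · exact Or.inr (Or.inl b_eq.symm)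
  · rintro (rfl | rfl | rfl)
    · exact ⟨fanD_left c b, Or.inl rfl, Or.inr (Or.inr ⟨rfl, ha⟩)⟩
    · exact ⟨fanD_right a c, Or.inr (Or.inr ⟨rfl, neg_b_sq⟩), Or.inr (Or.inl rfl)⟩
    · exact ⟨fanD_self_neg (by rw [ha, one_mul]), Or.inr (Or.inl rfl), Or.inl (neg_neg a)⟩

end TernarySemigroup

theorem stmt_11_general {G : Type u} [TernarySemigroup G]
    (a b : G) (ha : a * a = 1) (hb : b * b = 1) :
    (b ≠ tneg * a → {c : G | Dt fanD c a b} = {a, b}) ∧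
    (b = tneg * a → {c : G | Dt fanD c a b} = Set.univ) ∧
    (∀ c : G, c * c = 1 → (fanD c a b ↔ Dt fanD c a b)) := by
  simp only [tneg_mul, dt_fanD_iff ha hb]
  refine ⟨fun b_ne => ?_, fun b_eq => ?_, fun c hc => ?_⟩
  · ext c
    simp [b_ne]
  · ext c
    simp [b_eq]
  · simp [fanD_iff_of_mul_self_eq_one hc, ha]

/-- The invertible elements of a RS-fan form a fan in the sense of reduced special groups:
for units `a, b`, `D^t(a,b) = {a,b}` if `b ≠ -a`, `D^t(a,b) = G` if `b = -a`, and for a unit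
`c`, representation and transversal representation agree. -/
theorem stmt_11 {G : Type u} [TernarySemigroup G] (hZ : CondZ G)
    (a b : G) (ha : a * a = 1) (hb : b * b = 1) :
    (b ≠ tneg * a → {c : G | Dt fanD c a b} = {a, b}) ∧
    (b = tneg * a → {c : G | Dt fanD c a b} = Set.univ) ∧
    (∀ c : G, c * c = 1 → (fanD c a b ↔ Dt fanD c a b)) :=
  stmt_11_general a b ha hb
end

section
/- Let F be a RS-fan with representation partial order ≤. Then for a, b ∈ F: (1) if a ≤ b and a ≠ b, then a ∈ Id(F) or -b ∈ Id(F); in particular, (2) if neither a, -a, b nor -b is a square (a, b ∉ Id(F) ∪ -Id(F)) and a ≠ b, then a and b are incomparable under ≤. -/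
universe u

open TernarySemigroup

/-- The representation partial order on a RS-fan: `a ≤ b` iff `a ∈ D(1,b)` and
`-b ∈ D(1,-a)`. -/
def rle {G : Type u} [TernarySemigroup G] (a b : G) : Prop :=
  fanD a 1 b ∧ fanD (tneg * b) 1 (tneg * a)

/-!
Up to sign changes, `a ≤ b` with `a` and `-b` non-squares leaves two options for `a`
(`a = b x²` or `a = -ab`) and two for `b` (`b = a y²` or `b = ab`). If `a = b x²` and `b = a y²`,
idempotency of squares forces `a = b`. If `b = ab`, then `a` is a multiple of `b`, which
multiplication by `a` fixes, so `a = a²`; the option `a = -ab` is the same situation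
for the pair `(-b, -a)`.
-/

theorem isIdempotentElem_of_mul_eq_of_dvd {S : Type*} [Semigroup S] {a b : S}
    (hab : a * b = b) (hdvd : b ∣ a) : IsIdempotentElem a := by
  obtain ⟨c, hc⟩ := hdvd
  calc a * a = a * b * c := by rw [mul_assoc, ← hc]
    _ = a := by rw [hab, ← hc]

theorem eq_of_eq_mul_isIdempotentElem_of_eq_mul {S : Type*} [CommSemigroup S] {a b e f : S}
    (he : IsIdempotentElem e) (hab : a = b * e) (hba : b = a * f) : a = b := by
  have hae : a * e = a := by rw [hab, mul_assoc, he.eq]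
  calc a = b * e := hab
    _ = a * e * f := by rw [mul_right_comm, ← hba]
    _ = b := by rw [hae, ← hba]

namespace TernarySemigroup

variable {G : Type u} [TernarySemigroup G] {a b c : G}

theorem isIdempotentElem_mul_self (x : G) : IsIdempotentElem (x * x) := by
  rw [IsIdempotentElem, ← mul_assoc, cube]

theorem tneg_mul_tneg_mul (x : G) : tneg * (tneg * x) = x := by
  rw [← mul_assoc, tneg_mul_tneg, one_mul]

theorem tneg_mul_mul_tneg_mul (x y : G) : tneg * x * (tneg * y) = x * y := by
  rw [mul_mul_mul_comm, tneg_mul_tneg, one_mul]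

theorem tneg_mul_inj {x y : G} : tneg * x = tneg * y ↔ x = y :=
  (IsUnit.of_mul_eq_one _ tneg_mul_tneg).mul_right_inj

theorem fanD_one_left_iff :
    fanD c 1 b ↔ IsSquare c ∨ (∃ x : G, c = b * (x * x)) ∨ c = tneg * (c * b) := by
  simp only [fanD, IsSquare, one_mul, mul_one, and_true]

theorem fanD_tneg_mul_one_tneg_mul_iff :
    fanD (tneg * b) 1 (tneg * a) ↔
      IsSquare (tneg * b) ∨ (∃ x : G, b = a * (x * x)) ∨ b = a * b := by
  rw [fanD_one_left_iff, tneg_mul_mul_tneg_mul, tneg_mul_inj, mul_comm b a]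
  simp only [mul_assoc, tneg_mul_inj]

theorem isSquare_or_dvd_of_fanD_one_left (h : fanD c 1 b) : IsSquare c ∨ b ∣ c := by
  rcases fanD_one_left_iff.1 h with hc | ⟨x, hx⟩ | hc
  · exact Or.inl hc
  · exact Or.inr ⟨x * x, hx⟩
  · exact Or.inr ⟨tneg * c, by rwa [mul_left_comm, mul_comm b]⟩

theorem isSquare_of_fanD_one_left_of_mul_eq (h : fanD c 1 b) (hcb : c * b = b) : IsSquare c :=
  (isSquare_or_dvd_of_fanD_one_left h).elim id fun hdvd =>
    ⟨c, (isIdempotentElem_of_mul_eq_of_dvd hcb hdvd).eq.symm⟩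

theorem isSquare_or_isSquare_tneg_mul_of_rle_of_ne (h : rle a b) (hne : a ≠ b) :
    IsSquare a ∨ IsSquare (tneg * b) := by
  obtain ⟨ha, hb⟩ := h
  rcases fanD_one_left_iff.1 ha with ha_sq | ⟨x, hx⟩ | ha_eq
  · exact Or.inl ha_sq
  · rcases fanD_tneg_mul_one_tneg_mul_iff.1 hb with hb_sq | ⟨y, hy⟩ | hb_eq
    · exact Or.inr hb_sq
    · exact absurd
        (eq_of_eq_mul_isIdempotentElem_of_eq_mul (isIdempotentElem_mul_self x) hx hy) hne
    · exact Or.inl (isSquare_of_fanD_one_left_of_mul_eq ha hb_eq.symm)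
  · have hfix : tneg * b * (tneg * a) = tneg * a := by
      rw [tneg_mul_mul_tneg_mul, mul_comm, ← tneg_mul_inj, ← ha_eq, tneg_mul_tneg_mul]
    exact Or.inr (isSquare_of_fanD_one_left_of_mul_eq hb hfix)

end TernarySemigroup

theorem stmt_14_general {G : Type u} [TernarySemigroup G] (a b : G) :
    (rle a b → a ≠ b → IsSquare a ∨ IsSquare (tneg * b)) ∧
    (¬ IsSquare a → ¬ IsSquare (tneg * a) → ¬ IsSquare b → ¬ IsSquare (tneg * b) →
      a ≠ b → ¬ rle a b ∧ ¬ rle b a) := by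
  refine ⟨isSquare_or_isSquare_tneg_mul_of_rle_of_ne, fun ha hna hb hnb hne => ⟨?_, ?_⟩⟩
  · exact fun hab => (isSquare_or_isSquare_tneg_mul_of_rle_of_ne hab hne).elim ha hnb
  · exact fun hba => (isSquare_or_isSquare_tneg_mul_of_rle_of_ne hba hne.symm).elim hb hna

/-- In a RS-fan: (1) if `a < b` then `a` is a square or `-b` is a square; (2) distinct
elements none of whose ±-versions are squares are incomparable in the representation order. -/
theorem stmt_14 {G : Type u} [TernarySemigroup G] (hZ : CondZ G) (a b : G) :
    (rle a b → a ≠ b → (∃ x : G, a = x * x) ∨ (∃ x : G, tneg * b = x * x)) ∧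
    ((¬ ∃ x : G, a = x * x) → (¬ ∃ x : G, tneg * a = x * x) →
     (¬ ∃ x : G, b = x * x) → (¬ ∃ x : G, tneg * b = x * x) →
      a ≠ b → ¬ rle a b ∧ ¬ rle b a) :=
  stmt_14_general a b
end
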